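/- arXiv:2309.05816 — 3 statements merged into one kernel-verified Lean document; each statement's English description precedes it below -/
import Mathlib

section
/- Let T : M₀ → M₀ be a monotone distributional transform on the set of all probability distributions on ℝ. Then T commutes with the set 𝒟^R ∩ 𝒟̂ of probability distortions generated by right-continuous distortion functions d with d(0+)=0 and d(1−)=1 (i.e., (𝒟^R ∩ 𝒟̂) ∘ T = T ∘ (𝒟^R ∩ 𝒟̂) as sets of maps) if and only if T = T_d ∘ T^u for some increasing left-continuous u : ℝ → ℝ and some strictly increasing continuous distortion function d ∈ F̂_D. -/
/-!
For right-continuous `d`, `T_d F = d ∘ F`; and the left `q`-quantile of `T^u F` is the image under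
`u` of that of `F`, when `u` is increasing and left-continuous. Hence `T^u` commutes with every such
`T_d`, and for `T = T_s ∘ T^u`, with `s` an increasing bijection of `[0,1]`,
`T ∘ T_d = T_{s d s⁻¹} ∘ T`.

Conversely, let `T` commute with the set. Every point mass is fixed by all distortions, so `T` sends
the point mass at `x` to the point mass at some `u x`. The step distortion `1_{[q,1]}` sends `F` to
the point mass at its left `q`-quantile `leftQ F q`; a distortion matching it on the other side has
a threshold `τ q`, so that `τ q ≤ T F y ↔ u (leftQ F q) ≤ y`.

Suppose first `u a ≠ u b`, `a < b`, and let `s p` be the value at `min (u a) (u b)` of the image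
under `T` of the distribution with mass `p` at `a` and `1 - p` at `b`. Commutation makes `s`
surjective onto `[0,1]`. Now `u b < u a` is impossible: it gives `τ q ≤ s p ↔ p < q`, so
`s p = τ (1/2)` forces `p < 1/2`, and any `m` strictly between has `τ m ≤ s p = τ (1/2) ≤ s m`,
hence `m < m`. So `u a < u b`, `τ q ≤ s p ↔ q ≤ p`, and `τ = s` is an increasing bijection. If
instead `u` is constant, matching the step distortions in the other direction gives
`q ≤ T F y ↔ u ≤ y`, and `s = id` will do.

Therefore `s q ≤ T F y ↔ u (leftQ F q) ≤ y`. For `F` the logistic cdf this reads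
`F x ≤ s⁻¹ (T F y) ↔ u x ≤ y`, which makes `u` increasing and left-continuous; for general `F` it
says that `s⁻¹ (T F y)` and `T^u F y` compare alike with all `q` in `(0,1)`.
-/

open MeasureTheory Filter Topology Set

noncomputable section

/-- The set of cdfs of compactly supported probability distributions on ℝ:
increasing, right-continuous, equal to `0` for all sufficiently small `x` and
equal to `1` for all sufficiently large `x`. -/
def mSet : Set (ℝ → ℝ) :=
  {F | Monotone F ∧ (∀ x, ContinuousWithinAt F (Set.Ici x) x) ∧
    (∃ a, ∀ x ≤ a, F x = 0) ∧ (∃ b, ∀ x, b ≤ x → F x = 1)}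

/-- The set of cdfs of all probability distributions on ℝ: increasing,
right-continuous, with limit `0` at `-∞` and limit `1` at `+∞`. -/
def m0Set : Set (ℝ → ℝ) :=
  {F | Monotone F ∧ (∀ x, ContinuousWithinAt F (Set.Ici x) x) ∧
    Tendsto F atBot (𝓝 0) ∧ Tendsto F atTop (𝓝 1)}

/-- A utility function: increasing (non-strict) and continuous. -/
def IsUF (u : ℝ → ℝ) : Prop := Monotone u ∧ Continuous u

/-- An increasing and left-continuous function on ℝ. -/
def IsLeftCtsIncr (u : ℝ → ℝ) : Prop :=
  Monotone u ∧ ∀ x, ContinuousWithinAt u (Set.Iic x) x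

/-- A distortion function: an increasing function `d : [0,1] → [0,1]` with
`d 0 = 0` and `d 1 = 1` (values outside `[0,1]` are irrelevant). -/
def IsDF (d : ℝ → ℝ) : Prop :=
  MonotoneOn d (Set.Icc 0 1) ∧ d 0 = 0 ∧ d 1 = 1

/-- Right-continuity of a distortion function on `[0,1)`. -/
def DFRightCts (d : ℝ → ℝ) : Prop :=
  ∀ x ∈ Set.Ico (0:ℝ) 1, ContinuousWithinAt d (Set.Ioi x) x

/-- A distortion function with moreover `d(0+) = 0` and `d(1-) = 1`. -/
def IsDFhat (d : ℝ → ℝ) : Prop :=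
  IsDF d ∧ Tendsto d (𝓝[>] (0:ℝ)) (𝓝 0) ∧ Tendsto d (𝓝[<] (1:ℝ)) (𝓝 1)

/-- The probability distortion generated by `d`:  `T_d F x = (d ∘ F)(x+)`,
the right limit of `d ∘ F` at `x`. -/
noncomputable def distortT (d F : ℝ → ℝ) : ℝ → ℝ :=
  fun x => Function.rightLim (d ∘ F) x

/-- The utility transform `T^u`: it maps a cdf `F` to the cdf of the
pushforward under `u` of the probability measure with cdf `F`. -/
noncomputable def utilityT (u F : ℝ → ℝ) : ℝ → ℝ := by
  classical
  exact
    if h : Monotone F ∧ ∀ x, ContinuousWithinAt F (Set.Ici x) x then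
      fun x => ((StieltjesFunction.measure ⟨F, h.1, h.2⟩).map u (Set.Iic x)).toReal
    else F

/-- Left quantile `F_L^{-1}(p) = inf {x | F x ≥ p}`. -/
noncomputable def leftQ (F : ℝ → ℝ) (p : ℝ) : ℝ := sInf {x | p ≤ F x}

/-- Right quantile `F_R^{-1}(p) = inf {x | F x > p}`. -/
noncomputable def rightQ (F : ℝ → ℝ) (p : ℝ) : ℝ := sInf {x | p < F x}

section UnitInterval

lemma eq_of_forall_le_iff_of_mem_Icc {p w : ℝ} (hp : p ∈ Icc 0 1) (hw : w ∈ Icc 0 1)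
    (h : ∀ q ∈ Ioo (0 : ℝ) 1, q ≤ p ↔ q ≤ w) : p = w := by
  have le_of_imp {p w : ℝ} (hp : p ∈ Icc 0 1) (hw : w ∈ Icc 0 1)
      (h : ∀ q ∈ Ioo (0 : ℝ) 1, q ≤ p → q ≤ w) : p ≤ w := by
    refine le_of_forall_lt_imp_le_of_dense fun q hq => ?_
    rcases le_or_gt q 0 with hq0 | hq0
    · exact hq0.trans hw.1
    · exact h q ⟨hq0, hq.trans_le hp.2⟩ hq.le
  exact le_antisymm (le_of_imp hp hw fun q hq => (h q hq).mp)
    (le_of_imp hw hp fun q hq => (h q hq).mpr)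

/-- The increasing bijections of `[0,1]`, as functions on `ℝ` whose values outside `[0,1]` are
irrelevant. By `isUnitIso_iff` these are the strictly increasing continuous members of `F̂_D`. -/
def IsUnitIso (s : ℝ → ℝ) : Prop :=
  StrictMonoOn s (Icc 0 1) ∧ s '' Icc 0 1 = Icc 0 1

namespace IsUnitIso

variable {s : ℝ → ℝ}

lemma bijOn (hs : IsUnitIso s) : BijOn s (Icc 0 1) (Icc 0 1) :=
  ⟨mapsTo_iff_image_subset.mpr hs.2.subset, hs.1.injOn, hs.2.superset⟩

lemma map_zero (hs : IsUnitIso s) : s 0 = 0 := by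
  have h0 : (0 : ℝ) ∈ Icc 0 1 := unitInterval.zero_mem
  obtain ⟨x, hx, hsx⟩ := hs.bijOn.surjOn h0
  exact le_antisymm ((hs.1.monotoneOn h0 hx hx.1).trans hsx.le) (hs.bijOn.mapsTo h0).1

lemma map_one (hs : IsUnitIso s) : s 1 = 1 := by
  have h1 : (1 : ℝ) ∈ Icc 0 1 := unitInterval.one_mem
  obtain ⟨x, hx, hsx⟩ := hs.bijOn.surjOn h1
  exact le_antisymm (hs.bijOn.mapsTo h1).2 (hsx.ge.trans (hs.1.monotoneOn hx h1 hx.2))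

lemma continuousOn (hs : IsUnitIso s) : ContinuousOn s (Icc 0 1) := by
  have hcont : Continuous (hs.bijOn.mapsTo.restrict) :=
    Monotone.continuous_of_surjective (fun x y hxy => hs.1.monotoneOn x.2 y.2 hxy)
      ((MapsTo.restrict_surjective_iff _).mpr hs.bijOn.surjOn)
  exact continuousOn_iff_continuous_domRestrict.mpr (continuous_subtype_val.comp hcont)

lemma exists_inverse (hs : IsUnitIso s) :
    ∃ f, IsUnitIso f ∧ InvOn f s (Icc 0 1) (Icc 0 1) := by
  have hinv := hs.bijOn.invOn_invFunOn
  have hbij := hs.bijOn.symm hinv.symm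
  refine ⟨_, ⟨fun x hx y hy hxy => ?_, hbij.image_eq⟩, hinv⟩
  rwa [← hs.1.lt_iff_lt (hbij.mapsTo hx) (hbij.mapsTo hy), hinv.2 hx, hinv.2 hy]

end IsUnitIso

end UnitInterval

section Distortion

/-- The class `F_D^R ∩ F̂_D` of right-continuous distortion functions `d` with `d(0+) = 0` and
`d(1-) = 1`. -/
def IsRightDFhat (d : ℝ → ℝ) : Prop :=
  IsDFhat d ∧ DFRightCts d

variable {d e : ℝ → ℝ}

lemma IsDF.mapsTo (hd : IsDF d) : MapsTo d (Icc 0 1) (Icc 0 1) := by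
  have := hd.1.mapsTo_Icc
  rwa [hd.2.1, hd.2.2] at this

lemma isRightDFhat_iff :
    IsRightDFhat d ↔ IsDF d ∧ (∀ x ∈ Icc (0 : ℝ) 1, ContinuousWithinAt d (Icc x 1) x) ∧
      ContinuousWithinAt d (Icc 0 1) 1 := by
  have right_iff {x : ℝ} (hx : x < 1) :
      ContinuousWithinAt d (Ioi x) x ↔ ContinuousWithinAt d (Icc x 1) x := by
    rw [continuousWithinAt_Ioi_iff_Ici, ContinuousWithinAt, ContinuousWithinAt,
      nhdsWithin_Icc_eq_nhdsGE hx]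
  have left_iff : ContinuousWithinAt d (Iio 1) 1 ↔ ContinuousWithinAt d (Icc 0 1) 1 := by
    rw [continuousWithinAt_Iio_iff_Iic, ContinuousWithinAt, ContinuousWithinAt,
      nhdsWithin_Icc_eq_nhdsLE one_pos]
  constructor
  · rintro ⟨⟨hd, -, h1⟩, hr⟩
    refine ⟨hd, fun x hx => ?_, left_iff.mp (by rwa [ContinuousWithinAt, hd.2.2])⟩
    rcases hx.2.lt_or_eq with hx1 | rfl
    · exact (right_iff hx1).mp (hr x ⟨hx.1, hx1⟩)
    · simpa only [Icc_self] using continuousWithinAt_singleton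
  · rintro ⟨hd, hr, h1⟩
    have hr' : DFRightCts d := fun x hx => (right_iff hx.2).mpr (hr x ⟨hx.1, hx.2.le⟩)
    have h0 := hr' 0 ⟨le_rfl, one_pos⟩
    have h1' := left_iff.mpr h1
    rw [ContinuousWithinAt, hd.2.1] at h0
    rw [ContinuousWithinAt, hd.2.2] at h1'
    exact ⟨⟨hd, h0, h1'⟩, hr'⟩

lemma IsRightDFhat.isDF (hd : IsRightDFhat d) : IsDF d := hd.1.1

lemma IsRightDFhat.comp (hd : IsRightDFhat d) (he : IsRightDFhat e) : IsRightDFhat (d ∘ e) := by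
  have ⟨hd, hdr, hd1⟩ := isRightDFhat_iff.mp hd
  have ⟨he, her, he1⟩ := isRightDFhat_iff.mp he
  refine isRightDFhat_iff.mpr ⟨⟨hd.1.comp he.1 he.mapsTo, ?_, ?_⟩, fun x hx => ?_, ?_⟩
  · rw [Function.comp_apply, he.2.1, hd.2.1]
  · rw [Function.comp_apply, he.2.2, hd.2.2]
  · exact (hdr _ (he.mapsTo hx)).comp (her x hx) fun y hy =>
      ⟨he.1 hx ⟨hx.1.trans hy.1, hy.2⟩ hy.1, (he.mapsTo ⟨hx.1.trans hy.1, hy.2⟩).2⟩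
  · have hd1' : ContinuousWithinAt d (Icc 0 1) (e 1) := by rwa [he.2.2]
    exact hd1'.comp he1 he.mapsTo

lemma isRightDFhat_of_continuousOn (hd : IsDF d) (hc : ContinuousOn d (Icc 0 1)) :
    IsRightDFhat d :=
  isRightDFhat_iff.mpr ⟨hd, fun x hx => (hc x hx).mono (Icc_subset_Icc_left hx.1),
    hc 1 unitInterval.one_mem⟩

lemma isUnitIso_iff {s : ℝ → ℝ} :
    IsUnitIso s ↔ IsDFhat s ∧ StrictMonoOn s (Icc 0 1) ∧ ContinuousOn s (Icc 0 1) := by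
  constructor
  · intro hs
    exact ⟨(isRightDFhat_of_continuousOn ⟨hs.1.monotoneOn, hs.map_zero, hs.map_one⟩
      hs.continuousOn).1, hs.1, hs.continuousOn⟩
  · rintro ⟨hd, hm, hc⟩
    refine ⟨hm, ?_⟩
    rw [hc.image_Icc_of_monotoneOn zero_le_one hm.monotoneOn, hd.1.2.1, hd.1.2.2]

lemma IsUnitIso.isRightDFhat {s : ℝ → ℝ} (hs : IsUnitIso s) : IsRightDFhat s :=
  isRightDFhat_of_continuousOn (isUnitIso_iff.mp hs).1.1 hs.continuousOn

end Distortion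

section Cdf

variable {d F : ℝ → ℝ}

lemma mem_Icc_of_mem_m0Set (hF : F ∈ m0Set) (x : ℝ) : F x ∈ Icc 0 1 :=
  ⟨hF.1.le_of_tendsto hF.2.2.1 x, hF.1.ge_of_tendsto hF.2.2.2 x⟩

lemma convex_m0Set : Convex ℝ m0Set := by
  rintro F ⟨hF, hFr, hF0, hF1⟩ G ⟨hG, hGr, hG0, hG1⟩ a b ha hb hab
  refine ⟨(hF.const_mul ha).add (hG.const_mul hb),
    fun x => ((hFr x).const_smul a).add ((hGr x).const_smul b), ?_, ?_⟩
  · change Tendsto (fun x => a * F x + b * G x) atBot (𝓝 0)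
    simpa only [mul_zero, add_zero] using (hF0.const_mul a).add (hG0.const_mul b)
  · change Tendsto (fun x => a * F x + b * G x) atTop (𝓝 1)
    simpa only [mul_one, hab] using (hF1.const_mul a).add (hG1.const_mul b)

lemma cdf_mem_m0Set (μ : Measure ℝ) : ⇑(ProbabilityTheory.cdf μ) ∈ m0Set :=
  ⟨ProbabilityTheory.monotone_cdf μ, (ProbabilityTheory.cdf μ).right_continuous,
    ProbabilityTheory.tendsto_cdf_atBot μ, ProbabilityTheory.tendsto_cdf_atTop μ⟩

lemma sigmoid_mem_m0Set : Real.sigmoid ∈ m0Set :=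
  ⟨Real.sigmoid_monotone, fun _ => continuous_sigmoid.continuousWithinAt,
    Real.tendsto_sigmoid_atBot, Real.tendsto_sigmoid_atTop⟩

lemma IsRightDFhat.comp_mem_m0Set (hd : IsRightDFhat d) (hF : F ∈ m0Set) : d ∘ F ∈ m0Set := by
  have ⟨hd, hdr, hd1⟩ := isRightDFhat_iff.mp hd
  have hFI := mem_Icc_of_mem_m0Set hF
  refine ⟨fun x y hxy => hd.1 (hFI x) (hFI y) (hF.1 hxy), fun x => ?_, ?_, ?_⟩
  · exact (hdr _ (hFI x)).comp (hF.2.1 x) fun y hy => ⟨hF.1 hy, (hFI y).2⟩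
  · have hd0 := (hdr 0 unitInterval.zero_mem).tendsto
    rw [hd.2.1] at hd0
    exact hd0.comp (tendsto_nhdsWithin_iff.mpr ⟨hF.2.2.1, .of_forall hFI⟩)
  · have hd1 := hd1.tendsto
    rw [hd.2.2] at hd1
    exact hd1.comp (tendsto_nhdsWithin_iff.mpr ⟨hF.2.2.2, .of_forall hFI⟩)

lemma IsRightDFhat.distortT_eq_comp (hd : IsRightDFhat d) (hF : F ∈ m0Set) :
    distortT d F = d ∘ F :=
  funext fun x => rightLim_eq_of_tendsto
    (continuousWithinAt_Ioi_iff_Ici.mpr ((hd.comp_mem_m0Set hF).2.1 x))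

lemma isRightDFhat_of_mem_m0Set (hF : F ∈ m0Set) (h0 : F 0 = 0) {b : ℝ} (hb : b < 1)
    (h1 : F b = 1) : IsRightDFhat F := by
  have eq_one {x : ℝ} (hx : b ≤ x) : F x = 1 :=
    le_antisymm (mem_Icc_of_mem_m0Set hF x).2 (h1.ge.trans (hF.1 hx))
  refine isRightDFhat_iff.mpr ⟨⟨hF.1.monotoneOn _, h0, eq_one hb.le⟩,
    fun x _ => (hF.2.1 x).mono Icc_subset_Ici_self, ?_⟩
  have heq : F =ᶠ[𝓝 1] fun _ => 1 := by
    filter_upwards [Ioi_mem_nhds hb] with x hx using eq_one (le_of_lt hx)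
  exact (continuousAt_const.congr heq.symm).continuousWithinAt

end Cdf

section Quantile

variable {F : ℝ → ℝ} {q c : ℝ}

lemma le_apply_iff_leftQ_le (hF : F ∈ m0Set) (hq : q ∈ Ioo 0 1) (x : ℝ) :
    q ≤ F x ↔ leftQ F q ≤ x := by
  obtain ⟨hm, hr, h0, h1⟩ := hF
  obtain ⟨t, ht⟩ := (h1.eventually_const_lt hq.2).exists
  obtain ⟨a, ha⟩ := (h0.eventually_lt_const hq.1).exists
  have hbdd : BddBelow {x | q ≤ F x} :=
    ⟨a, fun x hx => (hm.reflect_lt (ha.trans_le hx)).le⟩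
  have hmem : q ≤ F (leftQ F q) := by
    refine ge_of_tendsto ((hr _).mono Ioi_subset_Ici_self) ?_
    filter_upwards [self_mem_nhdsWithin] with y hy
    obtain ⟨z, hz, hzy⟩ := exists_lt_of_csInf_lt ⟨t, ht.le⟩ hy
    exact hz.trans (hm hzy.le)
  exact ⟨fun hx => csInf_le hbdd hx, fun hx => hmem.trans (hm hx)⟩

lemma leftQ_eq_of_le_iff (h : ∀ x, q ≤ F x ↔ c ≤ x) : leftQ F q = c := by
  simp only [leftQ, h]
  exact csInf_Ici

lemma leftQ_sigmoid (x : ℝ) : leftQ Real.sigmoid (Real.sigmoid x) = x :=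
  leftQ_eq_of_le_iff fun _ => Real.sigmoid_le_iff

lemma IsRightDFhat.exists_le_apply_iff {d : ℝ → ℝ} (hd : IsRightDFhat d) (hq : q ∈ Ioo 0 1) :
    ∃ τ ∈ Ioo (0 : ℝ) 1, ∀ t ∈ Icc (0 : ℝ) 1, q ≤ d t ↔ τ ≤ t := by
  set z := leftQ (d ∘ Real.sigmoid) q
  have hz := le_apply_iff_leftQ_le (hd.comp_mem_m0Set sigmoid_mem_m0Set) hq
  refine ⟨Real.sigmoid z, ⟨Real.sigmoid_pos z, Real.sigmoid_lt_one z⟩, fun t ht => ?_⟩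
  rcases ht.1.eq_or_lt with rfl | h0
  · simp [hd.isDF.2.1, hq.1.not_ge, (Real.sigmoid_pos z).not_ge]
  rcases ht.2.eq_or_lt with rfl | h1
  · simp [hd.isDF.2.2, hq.2.le, Real.sigmoid_le_one]
  obtain ⟨x, rfl⟩ : t ∈ range Real.sigmoid := Real.range_sigmoid ▸ ⟨h0, h1⟩
  exact (hz x).trans Real.sigmoid_le_iff.symm

end Quantile

section PointMasses

/-- The cdf of the point mass at `c`. On `[0,1]`, and for `0 < c < 1`, it is also the step
distortion function `1_{[c,1]}`, which sends `F` to the point mass at its left `c`-quantile. -/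
def diracCdf (c x : ℝ) : ℝ := if c ≤ x then 1 else 0

/-- The cdf of the distribution with mass `p` at `a` and mass `1 - p` at `b`. -/
def twoPointCdf (a b p : ℝ) : ℝ → ℝ := p • diracCdf a + (1 - p) • diracCdf b

variable {d F : ℝ → ℝ} {a b c p q x : ℝ}

lemma diracCdf_mem_m0Set (c : ℝ) : diracCdf c ∈ m0Set := by
  have heq : diracCdf c = ProbabilityTheory.cdf (Measure.dirac c) := by
    ext x
    simp [diracCdf, ProbabilityTheory.cdf_eq_real, measureReal_def, indicator, apply_ite]
  exact heq ▸ cdf_mem_m0Set _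

lemma twoPointCdf_mem_m0Set (a b : ℝ) (hp : p ∈ Icc 0 1) : twoPointCdf a b p ∈ m0Set :=
  convex_m0Set (diracCdf_mem_m0Set a) (diracCdf_mem_m0Set b) hp.1 (sub_nonneg.mpr hp.2)
    (add_sub_cancel p 1)

lemma le_diracCdf_iff (hq : q ∈ Ioc 0 1) : q ≤ diracCdf c x ↔ c ≤ x := by
  rw [diracCdf]
  split_ifs with h <;> simp [h, hq.1, hq.2]

lemma twoPointCdf_apply (hab : a < b) :
    twoPointCdf a b p x = if b ≤ x then 1 else if a ≤ x then p else 0 := by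
  simp only [twoPointCdf, diracCdf, Pi.add_apply, Pi.smul_apply, smul_eq_mul]
  split_ifs <;> linarith

lemma leftQ_twoPointCdf (hab : a < b) (hq : q ∈ Ioo 0 1) :
    leftQ (twoPointCdf a b p) q = if q ≤ p then a else b := by
  refine leftQ_eq_of_le_iff fun x => ?_
  rw [twoPointCdf_apply hab]
  split_ifs <;> grind

lemma diracCdf_comp (hF : F ∈ m0Set) (hq : q ∈ Ioo 0 1) :
    diracCdf q ∘ F = diracCdf (leftQ F q) := by
  ext x
  simp only [Function.comp_apply, diracCdf, le_apply_iff_leftQ_le hF hq]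

lemma IsDF.comp_diracCdf (hd : IsDF d) (c : ℝ) : d ∘ diracCdf c = diracCdf c := by
  ext x
  simp only [Function.comp_apply, diracCdf, apply_ite d, hd.2.1, hd.2.2]

lemma IsDF.comp_twoPointCdf (hd : IsDF d) (hab : a < b) (p : ℝ) :
    d ∘ twoPointCdf a b p = twoPointCdf a b (d p) := by
  ext x
  simp only [Function.comp_apply, twoPointCdf_apply hab, apply_ite d, hd.2.1, hd.2.2]

lemma isRightDFhat_diracCdf (hq : q ∈ Ioo 0 1) : IsRightDFhat (diracCdf q) :=
  isRightDFhat_of_mem_m0Set (diracCdf_mem_m0Set q) (if_neg hq.1.not_ge) hq.2 (if_pos le_rfl)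

lemma exists_isRightDFhat_apply_eq {t r : ℝ} (ht : t ∈ Ioo 0 1) (hr : r ∈ Icc 0 1) :
    ∃ d, IsRightDFhat d ∧ d t = r := by
  obtain ⟨b, htb, hb1⟩ := exists_between ht.2
  refine ⟨twoPointCdf t b r,
    isRightDFhat_of_mem_m0Set (twoPointCdf_mem_m0Set t b hr) ?_ hb1 ?_, ?_⟩
  · rw [twoPointCdf_apply htb, if_neg (ht.1.trans htb).not_ge, if_neg ht.1.not_ge]
  · rw [twoPointCdf_apply htb, if_pos le_rfl]
  · rw [twoPointCdf_apply htb, if_neg htb.not_ge, if_pos le_rfl]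

end PointMasses

section UtilityTransform

variable {u d F : ℝ → ℝ}

lemma exists_measure_utilityT_eq (hF : F ∈ m0Set) :
    ∃ μ : Measure ℝ, IsProbabilityMeasure μ ∧ (∀ x, μ.real (Iic x) = F x) ∧
      ∀ u, Monotone u → ∀ y, utilityT u F y = μ.real {x | u x ≤ y} := by
  refine ⟨StieltjesFunction.measure ⟨F, hF.1, hF.2.1⟩,
    StieltjesFunction.isProbabilityMeasure _ hF.2.2.1 hF.2.2.2, fun x => ?_, fun u hu y => ?_⟩
  · rw [measureReal_def, StieltjesFunction.measure_Iic _ hF.2.2.1, sub_zero,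
      ENNReal.toReal_ofReal (mem_Icc_of_mem_m0Set hF x).1]
  · rw [utilityT, dif_pos ⟨hF.1, hF.2.1⟩]
    exact map_measureReal_apply hu.measurable measurableSet_Iic

lemma utilityT_mem_m0Set (hu : Monotone u) (hF : F ∈ m0Set) : utilityT u F ∈ m0Set := by
  obtain ⟨μ, _, -, hμ⟩ := exists_measure_utilityT_eq hF
  have : IsProbabilityMeasure (μ.map u) :=
    Measure.isProbabilityMeasure_map hu.measurable.aemeasurable
  have heq : utilityT u F = ProbabilityTheory.cdf (μ.map u) := by
    ext y
    rw [hμ u hu, ProbabilityTheory.cdf_eq_real,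
      map_measureReal_apply hu.measurable measurableSet_Iic]
    rfl
  exact heq ▸ cdf_mem_m0Set _

lemma le_utilityT_iff (hu : IsLeftCtsIncr u) (hF : F ∈ m0Set) {q : ℝ} (hq : q ∈ Ioo 0 1) (y : ℝ) :
    q ≤ utilityT u F y ↔ u (leftQ F q) ≤ y := by
  obtain ⟨μ, _, hμF, hμ⟩ := exists_measure_utilityT_eq hF
  have hQ := le_apply_iff_leftQ_le hF hq
  rw [hμ u hu.1]
  refine ⟨fun h => ?_, fun h => ?_⟩
  · by_contra! hy
    have hlt : ∀ᶠ x in 𝓝[<] leftQ F q, y < u x :=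
      ((hu.2 _).mono Iio_subset_Iic_self).eventually_const_lt hy
    obtain ⟨x, hx, hxQ⟩ := (hlt.and self_mem_nhdsWithin).exists
    have hsub : {x | u x ≤ y} ⊆ Iic x := fun z hz => (hu.1.reflect_lt (hz.trans_lt hx)).le
    exact hxQ.not_ge ((hQ x).mp (h.trans ((measureReal_mono hsub).trans_eq (hμF x))))
  · have hsub : Iic (leftQ F q) ⊆ {x | u x ≤ y} := fun z hz => (hu.1 hz).trans h
    exact ((hQ _).mpr le_rfl).trans ((hμF _).ge.trans (measureReal_mono hsub))

lemma utilityT_comp (hu : IsLeftCtsIncr u) (hd : IsRightDFhat d) (hF : F ∈ m0Set) :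
    utilityT u (d ∘ F) = d ∘ utilityT u F := by
  have hdF := hd.comp_mem_m0Set hF
  have huF := utilityT_mem_m0Set hu.1 hF
  ext y
  refine eq_of_forall_le_iff_of_mem_Icc
    (mem_Icc_of_mem_m0Set (utilityT_mem_m0Set hu.1 hdF) y)
    (mem_Icc_of_mem_m0Set (hd.comp_mem_m0Set huF) y) fun q hq => ?_
  obtain ⟨τ, hτ, hdτ⟩ := hd.exists_le_apply_iff hq
  have hQ : leftQ (d ∘ F) q = leftQ F τ := by
    refine leftQ_eq_of_le_iff fun x => ?_
    exact (hdτ _ (mem_Icc_of_mem_m0Set hF x)).trans (le_apply_iff_leftQ_le hF hτ x)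
  rw [le_utilityT_iff hu hdF hq, hQ, ← le_utilityT_iff hu hF hτ, Function.comp_apply,
    hdτ _ (mem_Icc_of_mem_m0Set huF y)]

lemma isLeftCtsIncr_of_forall_exists_le_iff {g : ℝ → ℝ} (hg : Monotone g) (hgc : Continuous g)
    (h : ∀ y, ∃ w, ∀ x, u x ≤ y ↔ g x ≤ w) : IsLeftCtsIncr u := by
  have hu : Monotone u := fun a b hab => by
    obtain ⟨w, hw⟩ := h (u b)
    exact (hw a).mpr ((hg hab).trans ((hw b).mp le_rfl))
  refine ⟨hu, fun b => tendsto_order.mpr ⟨fun y hy => ?_, fun y hy => ?_⟩⟩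
  · obtain ⟨w, hw⟩ := h y
    simp only [← not_le, hw] at hy ⊢
    have hgt := (hgc.tendsto b).eventually_const_lt (not_le.mp hy)
    filter_upwards [mem_nhdsWithin_of_mem_nhds hgt] with x hx using hx.not_ge
  · filter_upwards [self_mem_nhdsWithin] with x hx using (hu hx).trans_lt hy

end UtilityTransform

section Commutation

/-- `T` commutes with the set `𝒟^R ∩ 𝒟̂`. As `T_d F = d ∘ F` for these distortion functions, the
right limits in `distortT` are dispensed with. -/
def CommutesWithDistortions (T : (ℝ → ℝ) → ℝ → ℝ) : Prop :=
  (∀ d, IsRightDFhat d → ∃ d', IsRightDFhat d' ∧ ∀ F ∈ m0Set, d' ∘ T F = T (d ∘ F)) ∧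
    ∀ d', IsRightDFhat d' → ∃ d, IsRightDFhat d ∧ ∀ F ∈ m0Set, d' ∘ T F = T (d ∘ F)

variable {T : (ℝ → ℝ) → ℝ → ℝ} {u s : ℝ → ℝ}

lemma commutesWithDistortions_iff (hT : ∀ F ∈ m0Set, T F ∈ m0Set) :
    CommutesWithDistortions T ↔
      (∀ d : ℝ → ℝ, IsDFhat d → DFRightCts d → ∃ d' : ℝ → ℝ, IsDFhat d' ∧ DFRightCts d' ∧
        ∀ F ∈ m0Set, distortT d' (T F) = T (distortT d F)) ∧
      (∀ d' : ℝ → ℝ, IsDFhat d' → DFRightCts d' → ∃ d : ℝ → ℝ, IsDFhat d ∧ DFRightCts d ∧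
        ∀ F ∈ m0Set, distortT d' (T F) = T (distortT d F)) := by
  have key {d d' : ℝ → ℝ} (hd : IsRightDFhat d) (hd' : IsRightDFhat d') :
      (∀ F ∈ m0Set, d' ∘ T F = T (d ∘ F)) ↔
        ∀ F ∈ m0Set, distortT d' (T F) = T (distortT d F) :=
    forall₂_congr fun F hF => by
      rw [hd.distortT_eq_comp hF, hd'.distortT_eq_comp (hT F hF)]
  simp only [← and_imp, ← and_assoc (c := ∀ F ∈ m0Set, _)]
  exact and_congr
    (forall₂_congr fun d hd => exists_congr fun d' => and_congr_right fun hd' => key hd hd')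
    (forall₂_congr fun d' hd' => exists_congr fun d => and_congr_right fun hd => key hd hd')

lemma IsUnitIso.commutesWithDistortions (hs : IsUnitIso s) (hu : IsLeftCtsIncr u)
    (hTs : ∀ F ∈ m0Set, T F = s ∘ utilityT u F) : CommutesWithDistortions T := by
  obtain ⟨f, hf, hfs, hsf⟩ := hs.exists_inverse
  have T_comp {d F : ℝ → ℝ} (hd : IsRightDFhat d) (hF : F ∈ m0Set) :
      T (d ∘ F) = s ∘ d ∘ utilityT u F := by
    rw [hTs _ (hd.comp_mem_m0Set hF), utilityT_comp hu hd hF]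
  have huI {F : ℝ → ℝ} (hF : F ∈ m0Set) (y : ℝ) : utilityT u F y ∈ Icc 0 1 :=
    mem_Icc_of_mem_m0Set (utilityT_mem_m0Set hu.1 hF) y
  refine ⟨fun d hd => ?_, fun d' hd' => ?_⟩
  · refine ⟨s ∘ d ∘ f, hs.isRightDFhat.comp (hd.comp hf.isRightDFhat), fun F hF => ?_⟩
    ext y
    simp only [hTs F hF, T_comp hd hF, Function.comp_apply, hfs (huI hF y)]
  · have hd := hf.isRightDFhat.comp (hd'.comp hs.isRightDFhat)
    refine ⟨f ∘ d' ∘ s, hd, fun F hF => ?_⟩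
    ext y
    have hy := hd'.isDF.mapsTo (hs.bijOn.mapsTo (huI hF y))
    simp only [hTs F hF, T_comp hd hF, Function.comp_apply, hsf hy]

namespace CommutesWithDistortions

variable {F : ℝ → ℝ} {a b p q y : ℝ}

lemma exists_map_diracCdf (hc : CommutesWithDistortions T) (hT : ∀ F ∈ m0Set, T F ∈ m0Set) :
    ∃ u : ℝ → ℝ, ∀ x, T (diracCdf x) = diracCdf (u x) := by
  have hhalf : (1 / 2 : ℝ) ∈ Ioo 0 1 := by norm_num
  obtain ⟨d, hd, hdT⟩ := hc.2 _ (isRightDFhat_diracCdf hhalf)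
  refine ⟨fun x => leftQ (T (diracCdf x)) (1 / 2), fun x => ?_⟩
  have hx := diracCdf_mem_m0Set x
  rw [← diracCdf_comp (hT _ hx) hhalf, hdT _ hx, hd.isDF.comp_diracCdf]

lemma exists_threshold (hc : CommutesWithDistortions T) (hT : ∀ F ∈ m0Set, T F ∈ m0Set)
    (hu : ∀ x, T (diracCdf x) = diracCdf (u x)) (hq : q ∈ Ioo 0 1) :
    ∃ τ ∈ Ioo (0 : ℝ) 1, ∀ F ∈ m0Set, ∀ y, τ ≤ T F y ↔ u (leftQ F q) ≤ y := by
  obtain ⟨d, hd, hdT⟩ := hc.1 _ (isRightDFhat_diracCdf hq)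
  obtain ⟨τ, hτ, hdτ⟩ := hd.exists_le_apply_iff (q := 1 / 2) (by norm_num)
  refine ⟨τ, hτ, fun F hF y => ?_⟩
  have hdF : d (T F y) = diracCdf (u (leftQ F q)) y := by
    rw [← hu, ← diracCdf_comp hF hq, ← hdT F hF, Function.comp_apply]
  rw [← hdτ _ (mem_Icc_of_mem_m0Set (hT F hF) y), hdF, le_diracCdf_iff (by norm_num)]

lemma le_apply_iff_of_map_diracCdf_eq (hc : CommutesWithDistortions T)
    (hT : ∀ F ∈ m0Set, T F ∈ m0Set) (hu : ∀ x, T (diracCdf x) = diracCdf a) (hF : F ∈ m0Set)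
    (hq : q ∈ Ioo 0 1) : q ≤ T F y ↔ a ≤ y := by
  obtain ⟨d, hd, hdT⟩ := hc.2 _ (isRightDFhat_diracCdf hq)
  obtain ⟨τ, hτ, hTτ⟩ := hc.exists_threshold (u := fun _ => a) (q := 1 / 2) hT hu (by norm_num)
  rw [← hTτ _ (hd.comp_mem_m0Set hF) y, ← hdT F hF, Function.comp_apply,
    le_diracCdf_iff ⟨hτ.1, hτ.2.le⟩]

lemma surjOn_apply_twoPointCdf (hc : CommutesWithDistortions T) (hab : a < b)
    (hp : p ∈ Icc 0 1) (hTp : T (twoPointCdf a b p) y ∈ Ioo 0 1) :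
    SurjOn (fun p => T (twoPointCdf a b p) y) (Icc 0 1) (Icc 0 1) := by
  intro r hr
  obtain ⟨d', hd', rfl⟩ := exists_isRightDFhat_apply_eq hTp hr
  obtain ⟨d, hd, hdT⟩ := hc.2 d' hd'
  refine ⟨d p, hd.isDF.mapsTo hp, ?_⟩
  dsimp only
  rw [← hd.isDF.comp_twoPointCdf hab, ← hdT _ (twoPointCdf_mem_m0Set a b hp), Function.comp_apply]

lemma monotone_of_map_diracCdf (hc : CommutesWithDistortions T)
    (hT : ∀ F ∈ m0Set, T F ∈ m0Set) (hu : ∀ x, T (diracCdf x) = diracCdf (u x)) :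
    Monotone u := by
  refine monotone_iff_forall_lt.mpr fun a b hab => ?_
  by_contra! hba
  choose! τ hτ hTτ using fun q hq => hc.exists_threshold (q := q) hT hu hq
  have τ_le_iff {p q : ℝ} (hp : p ∈ Icc 0 1) (hq : q ∈ Ioo 0 1) :
      τ q ≤ T (twoPointCdf a b p) (u b) ↔ p < q := by
    rw [hTτ q hq _ (twoPointCdf_mem_m0Set a b hp), leftQ_twoPointCdf hab hq]
    grind
  have hhalf : (1 / 2 : ℝ) ∈ Ioo 0 1 := by norm_num
  have hhalf' := Ioo_subset_Icc_self hhalf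
  have h34 : (3 / 4 : ℝ) ∈ Ioo 0 1 := by norm_num
  have hmid : T (twoPointCdf a b (1 / 2)) (u b) ∈ Ioo 0 1 :=
    ⟨(hτ _ h34).1.trans_le ((τ_le_iff hhalf' h34).mpr (by norm_num)),
      (not_le.mp ((τ_le_iff hhalf' hhalf).not.mpr (lt_irrefl _))).trans (hτ _ hhalf).2⟩
  obtain ⟨p, hp, hpτ⟩ :=
    hc.surjOn_apply_twoPointCdf hab hhalf' hmid (Ioo_subset_Icc_self (hτ _ hhalf))
  obtain ⟨m, hpm, hm⟩ := exists_between ((τ_le_iff hp hhalf).mp hpτ.ge)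
  have hm01 : m ∈ Ioo 0 1 := ⟨hp.1.trans_lt hpm, hm.trans hhalf.2⟩
  have hle : τ m ≤ T (twoPointCdf a b m) (u b) := calc
    τ m ≤ T (twoPointCdf a b p) (u b) := (τ_le_iff hp hm01).mpr hpm
    _ = τ (1 / 2) := hpτ
    _ ≤ T (twoPointCdf a b m) (u b) := (τ_le_iff (Ioo_subset_Icc_self hm01) hhalf).mpr hm
  exact lt_irrefl m ((τ_le_iff (Ioo_subset_Icc_self hm01) hm01).mp hle)

lemma exists_isUnitIso_of_map_lt (hc : CommutesWithDistortions T)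
    (hT : ∀ F ∈ m0Set, T F ∈ m0Set) (hu : ∀ x, T (diracCdf x) = diracCdf (u x))
    (hab : a < b) (huab : u a < u b) :
    ∃ s, IsUnitIso s ∧
      ∀ q ∈ Ioo (0 : ℝ) 1, ∀ F ∈ m0Set, ∀ y, s q ≤ T F y ↔ u (leftQ F q) ≤ y := by
  set s : ℝ → ℝ := fun p => T (twoPointCdf a b p) (u a)
  choose! τ hτ hTτ using fun q hq => hc.exists_threshold (q := q) hT hu hq
  have τ_le_iff {p q : ℝ} (hp : p ∈ Icc 0 1) (hq : q ∈ Ioo 0 1) : τ q ≤ s p ↔ q ≤ p := by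
    rw [hTτ q hq _ (twoPointCdf_mem_m0Set a b hp), leftQ_twoPointCdf hab hq]
    grind
  have hmaps : MapsTo s (Icc 0 1) (Icc 0 1) := fun p hp =>
    mem_Icc_of_mem_m0Set (hT _ (twoPointCdf_mem_m0Set a b hp)) _
  have hmono : StrictMonoOn s (Icc 0 1) := by
    intro p hp p' hp' hpp'
    obtain ⟨m, hpm, hmp'⟩ := exists_between hpp'
    have hm : m ∈ Ioo 0 1 := ⟨hp.1.trans_lt hpm, hmp'.trans_le hp'.2⟩
    exact (not_le.mp ((τ_le_iff hp hm).not.mpr hpm.not_ge)).trans_le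
      ((τ_le_iff hp' hm).mpr hmp'.le)
  have hhalf : (1 / 2 : ℝ) ∈ Icc 0 1 := by norm_num
  have hmid : s (1 / 2) ∈ Ioo 0 1 :=
    ⟨(hmaps unitInterval.zero_mem).1.trans_lt (hmono unitInterval.zero_mem hhalf (by norm_num)),
      (hmono hhalf unitInterval.one_mem (by norm_num)).trans_le (hmaps unitInterval.one_mem).2⟩
  have hsurj : SurjOn s (Icc 0 1) (Icc 0 1) := hc.surjOn_apply_twoPointCdf hab hhalf hmid
  have τ_eq {q : ℝ} (hq : q ∈ Ioo 0 1) : τ q = s q := by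
    have hq' := Ioo_subset_Icc_self hq
    obtain ⟨p, hp, hpτ⟩ := hsurj (Ioo_subset_Icc_self (hτ q hq))
    have hqp : q ≤ p := (τ_le_iff hp hq).mp hpτ.ge
    exact le_antisymm ((τ_le_iff hq' hq).mpr le_rfl)
      ((hmono.monotoneOn hq' hp hqp).trans hpτ.le)
  exact ⟨s, ⟨hmono, hsurj.image_eq_of_mapsTo hmaps⟩, fun q hq => τ_eq hq ▸ hTτ q hq⟩

lemma exists_isUnitIso (hc : CommutesWithDistortions T) (hT : ∀ F ∈ m0Set, T F ∈ m0Set)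
    (hu : ∀ x, T (diracCdf x) = diracCdf (u x)) :
    ∃ s, IsUnitIso s ∧
      ∀ q ∈ Ioo (0 : ℝ) 1, ∀ F ∈ m0Set, ∀ y, s q ≤ T F y ↔ u (leftQ F q) ≤ y := by
  by_cases hlt : ∃ a b, u a < u b
  · obtain ⟨a, b, huab⟩ := hlt
    have hab := (hc.monotone_of_map_diracCdf hT hu).reflect_lt huab
    exact hc.exists_isUnitIso_of_map_lt hT hu hab huab
  · push Not at hlt
    have hconst : ∀ x, u x = u 0 := fun x => le_antisymm (hlt 0 x) (hlt x 0)
    refine ⟨id, ⟨strictMonoOn_id, image_id _⟩, fun q hq F hF y => ?_⟩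
    rw [id, hconst]
    exact hc.le_apply_iff_of_map_diracCdf_eq hT (fun x => hconst x ▸ hu x) hF hq

end CommutesWithDistortions

lemma IsUnitIso.isLeftCtsIncr (hs : IsUnitIso s) (hT : ∀ F ∈ m0Set, T F ∈ m0Set)
    (hsT : ∀ q ∈ Ioo (0 : ℝ) 1, ∀ F ∈ m0Set, ∀ y, s q ≤ T F y ↔ u (leftQ F q) ≤ y) :
    IsLeftCtsIncr u := by
  refine isLeftCtsIncr_of_forall_exists_le_iff Real.sigmoid_monotone continuous_sigmoid
    fun y => ?_
  obtain ⟨w, hw, hsw⟩ := hs.bijOn.surjOn (mem_Icc_of_mem_m0Set (hT _ sigmoid_mem_m0Set) y)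
  refine ⟨w, fun x => ?_⟩
  have hx : Real.sigmoid x ∈ Ioo 0 1 := ⟨Real.sigmoid_pos x, Real.sigmoid_lt_one x⟩
  rw [← hs.1.le_iff_le (Ioo_subset_Icc_self hx) hw, hsw, hsT _ hx _ sigmoid_mem_m0Set,
    leftQ_sigmoid]

lemma IsUnitIso.eq_comp_utilityT (hs : IsUnitIso s) (hT : ∀ F ∈ m0Set, T F ∈ m0Set)
    (hu : IsLeftCtsIncr u)
    (hsT : ∀ q ∈ Ioo (0 : ℝ) 1, ∀ F ∈ m0Set, ∀ y, s q ≤ T F y ↔ u (leftQ F q) ≤ y)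
    {F : ℝ → ℝ} (hF : F ∈ m0Set) : T F = s ∘ utilityT u F := by
  ext y
  obtain ⟨w, hw, hsw⟩ := hs.bijOn.surjOn (mem_Icc_of_mem_m0Set (hT F hF) y)
  have hwu : w = utilityT u F y := by
    refine eq_of_forall_le_iff_of_mem_Icc hw
      (mem_Icc_of_mem_m0Set (utilityT_mem_m0Set hu.1 hF) y) fun q hq => ?_
    rw [← hs.1.le_iff_le (Ioo_subset_Icc_self hq) hw, hsw, hsT q hq F hF, le_utilityT_iff hu hF hq]
  rw [Function.comp_apply, ← hwu, hsw]

lemma commutesWithDistortions_iff_exists_eq_comp_utilityT (hT : ∀ F ∈ m0Set, T F ∈ m0Set) :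
    CommutesWithDistortions T ↔
      ∃ s u, IsUnitIso s ∧ IsLeftCtsIncr u ∧ ∀ F ∈ m0Set, T F = s ∘ utilityT u F := by
  constructor
  · intro hc
    obtain ⟨u, hTu⟩ := hc.exists_map_diracCdf hT
    obtain ⟨s, hs, hsT⟩ := hc.exists_isUnitIso hT hTu
    have hu := hs.isLeftCtsIncr hT hsT
    exact ⟨s, u, hs, hu, fun F hF => hs.eq_comp_utilityT hT hu hsT hF⟩
  · rintro ⟨s, u, hs, hu, hTs⟩
    exact hs.commutesWithDistortions hu hTs

end Commutation

theorem stmt13_general (T : (ℝ → ℝ) → ℝ → ℝ) (hT : ∀ F ∈ m0Set, T F ∈ m0Set) :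
    ((∀ d : ℝ → ℝ, IsDFhat d → DFRightCts d → ∃ d' : ℝ → ℝ, IsDFhat d' ∧ DFRightCts d' ∧
        ∀ F ∈ m0Set, distortT d' (T F) = T (distortT d F)) ∧
      (∀ d' : ℝ → ℝ, IsDFhat d' → DFRightCts d' → ∃ d : ℝ → ℝ, IsDFhat d ∧ DFRightCts d ∧
        ∀ F ∈ m0Set, distortT d' (T F) = T (distortT d F))) ↔
      ∃ d u : ℝ → ℝ, IsLeftCtsIncr u ∧ IsDFhat d ∧ StrictMonoOn d (Set.Icc 0 1) ∧
        ContinuousOn d (Set.Icc 0 1) ∧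
        ∀ F ∈ m0Set, T F = distortT d (utilityT u F) := by
  rw [← commutesWithDistortions_iff hT, commutesWithDistortions_iff_exists_eq_comp_utilityT hT]
  refine exists₂_congr fun s u => ?_
  constructor
  · rintro ⟨hs, hu, hTs⟩
    obtain ⟨hsd, hsm, hsc⟩ := isUnitIso_iff.mp hs
    refine ⟨hu, hsd, hsm, hsc, fun F hF => ?_⟩
    rw [hTs F hF, hs.isRightDFhat.distortT_eq_comp (utilityT_mem_m0Set hu.1 hF)]
  · rintro ⟨hu, hsd, hsm, hsc, hTs⟩
    have hs : IsUnitIso s := isUnitIso_iff.mpr ⟨hsd, hsm, hsc⟩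
    refine ⟨hs, hu, fun F hF => ?_⟩
    rw [hTs F hF, hs.isRightDFhat.distortT_eq_comp (utilityT_mem_m0Set hu.1 hF)]

/-- A monotone map `T : M₀ → M₀` commutes with the set `𝒟^R ∩ 𝒟̂` of
probability distortions generated by right-continuous distortion functions `d`
with `d(0+) = 0` and `d(1-) = 1` if and only if `T = T_d ∘ T^u` for some
increasing left-continuous `u : ℝ → ℝ` and some strictly increasing continuous
distortion function `d ∈ F̂_D`. -/
theorem stmt13 (T : (ℝ → ℝ) → ℝ → ℝ) (hT : ∀ F ∈ m0Set, T F ∈ m0Set)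
    (hmono : ∀ F ∈ m0Set, ∀ G ∈ m0Set, (∀ x, G x ≤ F x) → ∀ x, T G x ≤ T F x) :
    ((∀ d : ℝ → ℝ, IsDFhat d → DFRightCts d → ∃ d' : ℝ → ℝ, IsDFhat d' ∧ DFRightCts d' ∧
        ∀ F ∈ m0Set, distortT d' (T F) = T (distortT d F)) ∧
      (∀ d' : ℝ → ℝ, IsDFhat d' → DFRightCts d' → ∃ d : ℝ → ℝ, IsDFhat d ∧ DFRightCts d ∧
        ∀ F ∈ m0Set, distortT d' (T F) = T (distortT d F))) ↔
      ∃ d u : ℝ → ℝ, IsLeftCtsIncr u ∧ IsDFhat d ∧ StrictMonoOn d (Set.Icc 0 1) ∧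
        ContinuousOn d (Set.Icc 0 1) ∧
        ∀ F ∈ m0Set, T F = distortT d (utilityT u F) :=
  stmt13_general T hT
end
end

section
/- Let F₀ be the standard Cauchy cdf, F₀(x) = 1/2 + (1/π)·arctan(x). Then for every probability distribution F on ℝ (with cdf F) there exists a right-continuous distortion function d with d(0+)=0 and d(1−)=1 such that T_d(F₀) = F; explicitly, d(x) = F((F₀)_R^{-1}(x)) for x ∈ (0,1), d(0)=0, d(1)=1 works, where (F₀)_R^{-1}(x) = inf{t ∈ ℝ : F₀(t) > x}. Consequently M₀ = {T_d(F₀) : d right-continuous, d ∈ F̂_D}. -/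
/-!
A strictly increasing `G` with range `(0,1)`, such as the Cauchy cdf, carries the filters at `-∞`,
at `+∞` and to the right of `x` onto the filters to the right of `0`, to the left of `1` and to
the right of `G x`. Reading monotonicity and limits of `d` through `G`, a function `d` with
`d 0 = 0` and `d 1 = 1` is therefore a right-continuous element of the class `F̂_D` if and only if
`d ∘ G` is a cdf, in which case `T_d G = d ∘ G`. Since `G` is strictly increasing, its right
quantile is a left inverse of it, so `d = F ∘ G_R⁻¹` satisfies `d ∘ G = F` and every cdf `F` is
attained.
-/

open MeasureTheory Filter Topology Set

noncomputable section

/-- The standard Cauchy cdf `F₀ x = 1/2 + (1/π) · arctan x`. -/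
noncomputable def F0 : ℝ → ℝ := fun x => 1 / 2 + (1 / Real.pi) * Real.arctan x

/-- The explicit distortion function `d(x) = F((F₀)_R^{-1}(x))` for
`x ∈ (0,1)`, with `d 0 = 0` and `d 1 = 1`. -/
noncomputable def dOf (F : ℝ → ℝ) : ℝ → ℝ := fun x =>
  if x ≤ 0 then 0 else if 1 ≤ x then 1 else F (rightQ F0 x)

section StrictMono

variable {α β : Type*} [LinearOrder α] [LinearOrder β] {f : α → β} {a b : β}

lemma map_atTop_of_strictMono_of_range_eq_Ioo [TopologicalSpace β] [OrderTopology β]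
    [DenselyOrdered β] (hf : StrictMono f) (hr : range f = Ioo a b) (hab : a < b) :
    map f atTop = 𝓝[<] b := by
  let e : α ≃o Ioo a b := (hf.orderIso f).trans (OrderIso.setCongr _ _ hr)
  rw [← map_coe_Ioo_atTop hab, ← e.map_atTop, map_map]
  rfl

lemma map_atBot_of_strictMono_of_range_eq_Ioo [TopologicalSpace β] [OrderTopology β]
    [DenselyOrdered β] (hf : StrictMono f) (hr : range f = Ioo a b) (hab : a < b) :
    map f atBot = 𝓝[>] a := by
  let e : α ≃o Ioo a b := (hf.orderIso f).trans (OrderIso.setCongr _ _ hr)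
  rw [← map_coe_Ioo_atBot hab, ← e.map_atBot, map_map]
  rfl

lemma image_Ioi_of_strictMono_of_range_eq_Ioo (hf : StrictMono f) (hr : range f = Ioo a b)
    (x : α) : f '' Ioi x = Ioo (f x) b := by
  have hpre : Ioi x = f ⁻¹' Ioi (f x) := ext fun _ => hf.lt_iff_lt.symm
  have hx : f x ∈ Ioo a b := hr ▸ mem_range_self x
  rw [hpre, image_preimage_eq_inter_range, hr, Ioi_inter_Ioo, max_eq_left hx.1.le]

lemma map_nhdsGT_of_strictMono_of_range_eq_Ioo [TopologicalSpace α] [OrderTopology α]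
    [TopologicalSpace β] [OrderTopology β] (hf : StrictMono f) (hr : range f = Ioo a b) (x : α) :
    map f (𝓝[>] x) = 𝓝[>] (f x) := by
  have hemb : IsEmbedding f := hf.isEmbedding_of_ordConnected (hr ▸ ordConnected_Ioo)
  have hx : f x ∈ Ioo a b := hr ▸ mem_range_self x
  rw [hemb.map_nhdsWithin_eq, image_Ioi_of_strictMono_of_range_eq_Ioo hf hr,
    nhdsWithin_Ioo_eq_nhdsGT hx.2]

end StrictMono

lemma monotone_comp_iff_monotoneOn_range {α β γ : Type*} [LinearOrder α] [Preorder β]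
    [Preorder γ] {f : α → β} {g : β → γ} (hf : StrictMono f) :
    Monotone (g ∘ f) ↔ MonotoneOn g (range f) := by
  refine ⟨?_, fun hg => monotoneOn_univ.1 (hg.comp (hf.monotone.monotoneOn univ) ?_)⟩
  · rintro hgf _ ⟨x, rfl⟩ _ ⟨y, rfl⟩ hxy
    exact hgf (hf.le_iff_le.1 hxy)
  · exact fun x _ => mem_range_self x

lemma monotoneOn_Icc_of_monotoneOn_Ioo_of_tendsto {α β : Type*} [LinearOrder α] [TopologicalSpace α]
    [OrderTopology α] [DenselyOrdered α] [LinearOrder β] [TopologicalSpace β]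
    [OrderClosedTopology β] {f : α → β} {a b : α} (hab : a < b) (hf : MonotoneOn f (Ioo a b))
    (ha : Tendsto f (𝓝[>] a) (𝓝 (f a))) (hb : Tendsto f (𝓝[<] b) (𝓝 (f b))) :
    MonotoneOn f (Icc a b) := by
  have hclosure_a : a ∈ closure (Ioc a b) := closure_Ioc hab.ne ▸ left_mem_Icc.2 hab.le
  have hclosure_b : b ∈ closure (Ioo a b) := closure_Ioo hab.ne ▸ right_mem_Icc.2 hab.le
  have hIoc : MonotoneOn f (Ioc a b) := by
    rw [← Ioo_insert_right hab]
    exact hf.insert_of_continuousWithinAt (mem_closure_iff_clusterPt.1 hclosure_b)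
      ((continuousWithinAt_Ioo_iff_Iio hab).2 hb)
  rw [← Ioc_insert_left hab.le]
  exact hIoc.insert_of_continuousWithinAt (mem_closure_iff_clusterPt.1 hclosure_a)
    ((continuousWithinAt_Ioc_iff_Ioi hab).2 ha)

lemma distortT_eq_comp_of_continuousWithinAt_Ici {d G : ℝ → ℝ}
    (h : ∀ x, ContinuousWithinAt (d ∘ G) (Ici x) x) : distortT d G = d ∘ G :=
  funext fun x => (h x).rightLim_eq

lemma rightQ_apply_of_strictMono {G : ℝ → ℝ} (hG : StrictMono G) (x : ℝ) : rightQ G (G x) = x := by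
  have hset : {y | G x < G y} = Ioi x := ext fun _ => hG.lt_iff_lt
  rw [rightQ, hset, csInf_Ioi]

/-- The distortion function `F ∘ G_R⁻¹` that carries the cdf `G` to the cdf `F`. Outside `(0,1)` it
is extended by the constants `0` and `1`, so that `dOf F` is the case of the Cauchy cdf `G = F0`. -/
def quantileDistortion (G F : ℝ → ℝ) : ℝ → ℝ := fun p =>
  if p ≤ 0 then 0 else if 1 ≤ p then 1 else F (rightQ G p)

lemma quantileDistortion_zero (G F : ℝ → ℝ) : quantileDistortion G F 0 = 0 :=
  if_pos le_rfl

lemma quantileDistortion_one (G F : ℝ → ℝ) : quantileDistortion G F 1 = 1 := by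
  simp [quantileDistortion]

section Reference

variable {G : ℝ → ℝ}

lemma quantileDistortion_comp (hG : StrictMono G) (hr : range G ⊆ Ioo 0 1) (F : ℝ → ℝ) :
    quantileDistortion G F ∘ G = F := by
  ext x
  have hx : G x ∈ Ioo (0 : ℝ) 1 := hr (mem_range_self x)
  rw [Function.comp_apply, quantileDistortion, if_neg hx.1.not_ge, if_neg hx.2.not_ge,
    rightQ_apply_of_strictMono hG]

lemma dfRightCts_iff_comp (hG : StrictMono G) (hr : range G = Ioo 0 1) {d : ℝ → ℝ}
    (hd : Tendsto d (𝓝[>] 0) (𝓝 (d 0))) :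
    DFRightCts d ↔ ∀ x, ContinuousWithinAt (d ∘ G) (Ici x) x := by
  have htransfer (x : ℝ) :
      ContinuousWithinAt (d ∘ G) (Ici x) x ↔ ContinuousWithinAt d (Ioi (G x)) (G x) := by
    rw [← continuousWithinAt_Ioi_iff_Ici, ContinuousWithinAt, ContinuousWithinAt,
      ← map_nhdsGT_of_strictMono_of_range_eq_Ioo hG hr, tendsto_map'_iff, Function.comp_apply]
  calc
    DFRightCts d ↔ ∀ p ∈ Ioo (0 : ℝ) 1, ContinuousWithinAt d (Ioi p) p := by
      rw [DFRightCts, ← Ioo_insert_left one_pos, forall_mem_insert]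
      exact and_iff_right hd
    _ ↔ ∀ x, ContinuousWithinAt (d ∘ G) (Ici x) x := by
      rw [← hr, forall_mem_range]
      exact forall_congr' fun x => (htransfer x).symm

lemma isDFhat_iff_comp (hG : StrictMono G) (hr : range G = Ioo 0 1) {d : ℝ → ℝ} :
    IsDFhat d ↔ (Monotone (d ∘ G) ∧ Tendsto (d ∘ G) atBot (𝓝 0) ∧ Tendsto (d ∘ G) atTop (𝓝 1)) ∧
      d 0 = 0 ∧ d 1 = 1 := by
  rw [monotone_comp_iff_monotoneOn_range hG, hr, ← tendsto_map'_iff, ← tendsto_map'_iff,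
    map_atBot_of_strictMono_of_range_eq_Ioo hG hr one_pos,
    map_atTop_of_strictMono_of_range_eq_Ioo hG hr one_pos]
  constructor
  · rintro ⟨⟨hmono, h0, h1⟩, hbot, htop⟩
    exact ⟨⟨hmono.mono Ioo_subset_Icc_self, hbot, htop⟩, h0, h1⟩
  · rintro ⟨⟨hmono, hbot, htop⟩, h0, h1⟩
    have hIcc : MonotoneOn d (Icc 0 1) :=
      monotoneOn_Icc_of_monotoneOn_Ioo_of_tendsto one_pos hmono (h0.symm ▸ hbot) (h1.symm ▸ htop)
    exact ⟨⟨hIcc, h0, h1⟩, hbot, htop⟩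

lemma isDFhat_and_dfRightCts_iff_comp_mem_m0Set (hG : StrictMono G) (hr : range G = Ioo 0 1)
    {d : ℝ → ℝ} : IsDFhat d ∧ DFRightCts d ↔ d ∘ G ∈ m0Set ∧ d 0 = 0 ∧ d 1 = 1 := by
  have hcts (hd : IsDFhat d) : DFRightCts d ↔ ∀ x, ContinuousWithinAt (d ∘ G) (Ici x) x :=
    dfRightCts_iff_comp hG hr (hd.1.2.1.symm ▸ hd.2.1)
  rw [and_congr_right hcts, isDFhat_iff_comp hG hr, m0Set, mem_ofPred_eq]
  tauto

theorem stmt17_general (hG : StrictMono G) (hr : range G = Ioo 0 1) :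
    (∀ F ∈ m0Set,
      (IsDFhat (quantileDistortion G F) ∧ DFRightCts (quantileDistortion G F)) ∧
        ∀ x, distortT (quantileDistortion G F) G x = F x) ∧
    m0Set = {H : ℝ → ℝ | ∃ d : ℝ → ℝ, IsDFhat d ∧ DFRightCts d ∧ ∀ x, H x = distortT d G x} := by
  have hattain (F : ℝ → ℝ) (hF : F ∈ m0Set) :
      (IsDFhat (quantileDistortion G F) ∧ DFRightCts (quantileDistortion G F)) ∧
        ∀ x, distortT (quantileDistortion G F) G x = F x := by
    have hcomp : quantileDistortion G F ∘ G = F := quantileDistortion_comp hG hr.subset F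
    have hmem : quantileDistortion G F ∘ G ∈ m0Set := hcomp.symm ▸ hF
    exact ⟨(isDFhat_and_dfRightCts_iff_comp_mem_m0Set hG hr).2
        ⟨hmem, quantileDistortion_zero G F, quantileDistortion_one G F⟩,
      congrFun ((distortT_eq_comp_of_continuousWithinAt_Ici hmem.2.1).trans hcomp)⟩
  refine ⟨hattain, Subset.antisymm (fun F hF => ?_) ?_⟩
  · obtain ⟨⟨hhat, hcts⟩, hT⟩ := hattain F hF
    exact ⟨quantileDistortion G F, hhat, hcts, fun x => (hT x).symm⟩
  · rintro H ⟨d, hhat, hcts, hH⟩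
    have hmem : d ∘ G ∈ m0Set :=
      ((isDFhat_and_dfRightCts_iff_comp_mem_m0Set hG hr).1 ⟨hhat, hcts⟩).1
    rwa [funext hH, distortT_eq_comp_of_continuousWithinAt_Ici hmem.2.1]

end Reference

lemma strictMono_F0 : StrictMono F0 :=
  (Real.arctan_strictMono.const_mul (one_div_pos.2 Real.pi_pos)).const_add (1 / 2)

lemma range_F0 : range F0 = Ioo 0 1 := by
  have hcomp : F0 = (fun t => 1 / Real.pi * t + 1 / 2) ∘ Real.arctan :=
    funext fun x => add_comm _ _
  have hleft : 1 / Real.pi * -(Real.pi / 2) + 1 / 2 = 0 := by field_simp; norm_num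
  have hright : 1 / Real.pi * (Real.pi / 2) + 1 / 2 = 1 := by field_simp; norm_num
  rw [hcomp, range_comp, Real.range_arctan, image_affine_Ioo (one_div_pos.2 Real.pi_pos), hleft,
    hright]

/-- For every cdf `F` on ℝ, the explicit `d = dOf F` is a right-continuous
distortion function with `d(0+) = 0`, `d(1-) = 1`, and `T_d F₀ = F`.
Consequently `M₀ = {T_d F₀ : d right-continuous, d ∈ F̂_D}`. -/
theorem stmt17 :
    (∀ F ∈ m0Set,
      (IsDFhat (dOf F) ∧ DFRightCts (dOf F)) ∧
        ∀ x, distortT (dOf F) F0 x = F x) ∧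
    m0Set = {G : ℝ → ℝ | ∃ d : ℝ → ℝ, IsDFhat d ∧ DFRightCts d ∧
      ∀ x, G x = distortT d F0 x} :=
  stmt17_general strictMono_F0 range_F0
end
end

section
/- Let d : [0,1] → [0,1] be given by d(x) = 1 for x ∈ (1/2, 1] and d(x) = 0 for x ∈ [0, 1/2]. Then d is a distortion function, and the associated probability distortion satisfies T_d(F) = δ_{F_R^{-1}(1/2)} (the point mass at the right quantile of F at level 1/2) for every F ∈ M; consequently T_d is monotone and commutes with T^u for every increasing continuous u : ℝ → ℝ, but T_d is not lower-semicontinuous: there exist F_n, F ∈ M with F_n → F weakly and G ∈ M such that T_d(F_n) ≤_st G for all n while T_d(F) ≤_st G fails (e.g., F_n = Bernoulli(1/2 − 1/n), F = Bernoulli(1/2), G = Uniform[0,1]). -/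
/-! Let `d = 𝟙_{(p, 1]}` and let `q = F_R⁻¹(p)` be the right quantile of the law of `X`. Since
`p < F y` for `y > q` and `F y ≤ p` for `y < q`, the function `d ∘ F` is the cdf of `δ_q` except
possibly at `q`, so `T_d F = δ_q`. Commutation with `T^u` is then the equivariance of the right
quantile: `u q` is the right quantile of the law of `u(X)`. Indeed, for `y < u q` the set `{u ≤ y}`
lies in `(-∞, q)`, which has mass at most `p`, while for `y > u q` right continuity of `u` yields
some `z > q` with `(-∞, z] ⊆ {u ≤ y}`, and `(-∞, z]` has mass more than `p`.

Lower semicontinuity fails along the two-point laws on `{0, 1}` with mass `sₙ ↓ p` at `0`: they are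
all sent to `δ_0`, whereas their weak limit, with mass exactly `p` at `0`, is sent to `δ_1`. -/

open MeasureTheory Filter Topology Set

noncomputable section

/-- The distortion function `d = 𝟙_{(1/2, 1]}`. -/
noncomputable def d18 : ℝ → ℝ := fun x => if 1 / 2 < x then 1 else 0

open ProbabilityTheory

section Cdf

variable {μ : Measure ℝ} {F : ℝ → ℝ}

lemma mSet_subset_m0Set : mSet ⊆ m0Set := by
  rintro F ⟨hmono, hright, ⟨a, ha⟩, ⟨b, hb⟩⟩
  exact ⟨hmono, hright,
    tendsto_const_nhds.congr' ((eventually_le_atBot a).mono fun x hx ↦ (ha x hx).symm),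
    tendsto_const_nhds.congr' ((eventually_ge_atTop b).mono fun x hx ↦ (hb x hx).symm)⟩

lemma exists_cdf_eq_of_mem_m0Set (hF : F ∈ m0Set) :
    ∃ μ : Measure ℝ, IsProbabilityMeasure μ ∧ ⇑(cdf μ) = F := by
  obtain ⟨hmono, hright, hbot, htop⟩ := hF
  let f : StieltjesFunction ℝ := ⟨F, hmono, hright⟩
  exact ⟨f.measure, f.isProbabilityMeasure hbot htop,
    congrArg (⇑) (cdf_measure_stieltjesFunction f hbot htop)⟩

lemma cdf_mem_mSet_of_ae_mem_Icc [IsProbabilityMeasure μ] {a b : ℝ}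
    (h : ∀ᵐ x ∂μ, x ∈ Icc a b) : ⇑(cdf μ) ∈ mSet := by
  refine ⟨monotone_cdf μ, (cdf μ).right_continuous, ⟨a - 1, fun x hx ↦ ?_⟩, ⟨b, fun x hx ↦ ?_⟩⟩
  · rw [cdf_eq_real, measureReal_eq_zero_iff]
    refine measure_mono_null (t := (Icc a b)ᶜ) (fun y hy hyab ↦ ?_) h
    linarith [hyab.1, mem_Iic.mp hy]
  · have hIic : Iic x ∈ ae μ := h.mono fun y hy ↦ hy.2.trans hx
    rw [cdf_eq_real, measureReal_def, (mem_ae_iff_prob_eq_one measurableSet_Iic).mp hIic,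
      ENNReal.toReal_one]

lemma cdf_dirac_apply (a x : ℝ) : cdf (Measure.dirac a) x = if a ≤ x then 1 else 0 := by
  split_ifs with h <;> simp [cdf_eq_real, measureReal_def, h]

lemma forall_cdf_dirac_le_iff {a b : ℝ} :
    (∀ x, cdf (Measure.dirac b) x ≤ cdf (Measure.dirac a) x) ↔ a ≤ b := by
  simp only [cdf_dirac_apply]
  refine ⟨fun h ↦ ?_, fun h x ↦ ?_⟩
  · by_contra hab
    simpa [hab, zero_lt_one.not_ge] using h b
  · split_ifs <;> linarith

lemma utilityT_cdf [IsProbabilityMeasure μ] {u : ℝ → ℝ} (hu : Measurable u) :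
    utilityT u (cdf μ) = cdf (μ.map u) := by
  have := Measure.isProbabilityMeasure_map (μ := μ) hu.aemeasurable
  funext x
  rw [utilityT, dif_pos ⟨monotone_cdf μ, (cdf μ).right_continuous⟩, cdf_eq_real]
  exact congrArg (fun ν : Measure ℝ ↦ (ν.map u).real (Iic x)) (measure_cdf μ)

lemma measureReal_Iio_eq_leftLim_cdf (μ : Measure ℝ) [IsProbabilityMeasure μ] (x : ℝ) :
    μ.real (Iio x) = Function.leftLim (cdf μ) x := by
  have hmeasure := (cdf μ).measure_Iio (tendsto_cdf_atBot μ) x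
  rw [measure_cdf, sub_zero] at hmeasure
  rw [measureReal_def, hmeasure, ENNReal.toReal_ofReal]
  exact (cdf_nonneg μ (x - 1)).trans ((monotone_cdf μ).le_leftLim (sub_one_lt x))

end Cdf

section RightQuantile

variable {μ : Measure ℝ} {p : ℝ}

lemma rightQ_cdf_le_iff (hp : p ∈ Ioo 0 1) {x : ℝ} :
    rightQ (cdf μ) p ≤ x ↔ ∀ y, x < y → p < cdf μ y := by
  have hne : {y | p < cdf μ y}.Nonempty :=
    ((tendsto_cdf_atTop μ).eventually_const_lt hp.2).exists
  obtain ⟨a, ha⟩ := ((tendsto_cdf_atBot μ).eventually_lt_const hp.1).exists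
  have hbdd : BddBelow {y | p < cdf μ y} :=
    ⟨a, fun y hy ↦ ((monotone_cdf μ).reflect_lt (ha.trans hy)).le⟩
  refine ⟨fun h y hxy ↦ ?_, fun h ↦ ?_⟩
  · obtain ⟨z, hz, hzy⟩ := exists_lt_of_csInf_lt hne (h.trans_lt hxy)
    exact hz.trans_le (monotone_cdf μ hzy.le)
  · exact le_of_forall_gt_imp_ge_of_dense fun y hxy ↦ csInf_le hbdd (h y hxy)

lemma lt_cdf_of_rightQ_lt (hp : p ∈ Ioo 0 1) {y : ℝ} (hy : rightQ (cdf μ) p < y) :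
    p < cdf μ y :=
  (rightQ_cdf_le_iff hp).mp le_rfl y hy

lemma cdf_le_of_lt_rightQ (hp : p ∈ Ioo 0 1) {y : ℝ} (hy : y < rightQ (cdf μ) p) :
    cdf μ y ≤ p := by
  by_contra! h
  exact hy.not_ge ((rightQ_cdf_le_iff hp).mpr fun z hz ↦ h.trans_le (monotone_cdf μ hz.le))

lemma measureReal_Iio_rightQ_le [IsProbabilityMeasure μ] (hp : p ∈ Ioo 0 1) :
    μ.real (Iio (rightQ (cdf μ) p)) ≤ p := by
  rw [measureReal_Iio_eq_leftLim_cdf]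
  refine le_of_tendsto ((monotone_cdf μ).tendsto_leftLim _) ?_
  filter_upwards [self_mem_nhdsWithin] with y hy
  exact cdf_le_of_lt_rightQ hp hy

lemma rightQ_cdf_map [IsProbabilityMeasure μ] (hp : p ∈ Ioo 0 1) {u : ℝ → ℝ} (hu : Monotone u)
    (hright : ContinuousWithinAt u (Ioi (rightQ (cdf μ) p)) (rightQ (cdf μ) p)) :
    rightQ (cdf (μ.map u)) p = u (rightQ (cdf μ) p) := by
  have := Measure.isProbabilityMeasure_map (μ := μ) hu.measurable.aemeasurable
  have hcdf (y : ℝ) : cdf (μ.map u) y = μ.real (u ⁻¹' Iic y) := by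
    rw [cdf_eq_real, map_measureReal_apply hu.measurable measurableSet_Iic]
  refine eq_of_forall_ge_iff fun c ↦ ?_
  rw [rightQ_cdf_le_iff hp]
  refine ⟨fun h ↦ ?_, fun h y hcy ↦ ?_⟩
  · by_contra! hc
    obtain ⟨y, hcy, hyu⟩ := exists_between hc
    have hsub : u ⁻¹' Iic y ⊆ Iio (rightQ (cdf μ) p) :=
      fun z hz ↦ hu.reflect_lt ((mem_Iic.mp hz).trans_lt hyu)
    have hle : cdf (μ.map u) y ≤ p :=
      (hcdf y).trans_le ((measureReal_mono hsub).trans (measureReal_Iio_rightQ_le hp))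
    exact hle.not_gt (h y hcy)
  · obtain ⟨z, hqz, huz⟩ :=
      (eventually_mem_nhdsWithin.and (hright.eventually_lt_const (h.trans_lt hcy))).exists
    calc p < cdf μ z := lt_cdf_of_rightQ_lt hp hqz
      _ = μ.real (Iic z) := cdf_eq_real μ z
      _ ≤ μ.real (u ⁻¹' Iic y) := measureReal_mono fun w hw ↦ (hu hw).trans huz.le
      _ = cdf (μ.map u) y := (hcdf y).symm

end RightQuantile

section Distortion

lemma distortT_le_distortT {d F G : ℝ → ℝ} (hd : IsDF d) (hF : F ∈ m0Set) (hG : G ∈ m0Set)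
    (hGF : ∀ x, G x ≤ F x) (x : ℝ) : distortT d G x ≤ distortT d F x := by
  obtain ⟨μ, -, rfl⟩ := exists_cdf_eq_of_mem_m0Set hF
  obtain ⟨ν, -, rfl⟩ := exists_cdf_eq_of_mem_m0Set hG
  have hmem (ρ : Measure ℝ) (y : ℝ) : cdf ρ y ∈ Icc 0 1 := ⟨cdf_nonneg ρ y, cdf_le_one ρ y⟩
  have hmono (ρ : Measure ℝ) : Monotone (d ∘ cdf ρ) :=
    fun y z hyz ↦ hd.1 (hmem ρ y) (hmem ρ z) (monotone_cdf ρ hyz)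
  exact le_of_tendsto_of_tendsto' ((hmono ν).tendsto_rightLim x) ((hmono μ).tendsto_rightLim x)
    fun y ↦ hd.1 (hmem ν y) (hmem μ y) (hGF y)

/-- The distortion function `𝟙_{(p, 1]}`, whose probability distortion collapses a law to its right
`p`-quantile; `d18` is the case `p = 1 / 2`. -/
def thresholdDF (p : ℝ) : ℝ → ℝ := fun x ↦ if p < x then 1 else 0

variable {μ : Measure ℝ} {p : ℝ}

lemma isDFhat_thresholdDF (hp : p ∈ Ioo 0 1) : IsDFhat (thresholdDF p) := by
  refine ⟨⟨fun x _ y _ hxy ↦ ?_, if_neg hp.1.not_gt, if_pos hp.2⟩, ?_, ?_⟩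
  · unfold thresholdDF
    split_ifs <;> linarith
  · refine tendsto_const_nhds.congr' ?_
    filter_upwards [Ioo_mem_nhdsGT hp.1] with x hx
    exact (if_neg hx.2.not_gt).symm
  · refine tendsto_const_nhds.congr' ?_
    filter_upwards [Ioo_mem_nhdsLT hp.2] with x hx
    exact (if_pos hx.1).symm

lemma distortT_thresholdDF_cdf (hp : p ∈ Ioo 0 1) :
    distortT (thresholdDF p) (cdf μ) = cdf (Measure.dirac (rightQ (cdf μ) p)) := by
  funext x
  refine rightLim_eq_of_tendsto (tendsto_const_nhds.congr' ?_)
  rw [cdf_dirac_apply]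
  split_ifs with hx
  · filter_upwards [self_mem_nhdsWithin] with y hxy
    exact (if_pos (lt_cdf_of_rightQ_lt hp (hx.trans_lt hxy))).symm
  · filter_upwards [Ioo_mem_nhdsGT (not_le.mp hx)] with y hy
    exact (if_neg (cdf_le_of_lt_rightQ hp hy.2).not_gt).symm

lemma distortT_thresholdDF_utilityT [IsProbabilityMeasure μ] (hp : p ∈ Ioo 0 1) {u : ℝ → ℝ}
    (hu : Monotone u)
    (hright : ContinuousWithinAt u (Ioi (rightQ (cdf μ) p)) (rightQ (cdf μ) p)) :
    distortT (thresholdDF p) (utilityT u (cdf μ)) =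
      utilityT u (distortT (thresholdDF p) (cdf μ)) := by
  rw [utilityT_cdf hu.measurable, distortT_thresholdDF_cdf hp, rightQ_cdf_map hp hu hright,
    distortT_thresholdDF_cdf hp, utilityT_cdf hu.measurable, Measure.map_dirac' hu.measurable]

end Distortion

section Bernoulli

open scoped unitInterval

variable {a b : ℝ} {s : I}

lemma cdf_bernoulliMeasure_mem_mSet (hab : a ≤ b) : ⇑(cdf Ber(a, b, s)) ∈ mSet := by
  refine cdf_mem_mSet_of_ae_mem_Icc (a := a) (b := b) (mem_ae_iff.mpr ?_)
  exact bernoulliMeasure_apply_of_notMem_of_notMem s measurableSet_Icc.compl (by simp [hab])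
    (by simp [hab])

lemma cdf_bernoulliMeasure_apply (x : ℝ) :
    cdf Ber(a, b, s) x =
      s * cdf (Measure.dirac a) x + (1 - s) * cdf (Measure.dirac b) x := by
  classical
  rw [cdf_eq_real, bernoulliMeasure_real_apply s measurableSet_Iic, cdf_dirac_apply,
    cdf_dirac_apply]
  split_ifs <;> simp_all

lemma tendsto_cdf_bernoulliMeasure {ι : Type*} {l : Filter ι} {t : ι → I}
    (ht : Tendsto t l (𝓝 s)) (x : ℝ) :
    Tendsto (fun i ↦ cdf Ber(a, b, t i) x) l (𝓝 (cdf Ber(a, b, s) x)) := by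
  simp only [cdf_bernoulliMeasure_apply]
  have ht' : Tendsto (fun i ↦ (t i : ℝ)) l (𝓝 s) := (continuous_subtype_val.tendsto s).comp ht
  exact (ht'.mul_const _).add ((ht'.const_sub 1).mul_const _)

lemma rightQ_cdf_bernoulliMeasure_le_iff {p : ℝ} (hp : p ∈ Ioo 0 1) (hab : a < b) :
    rightQ (cdf Ber(a, b, s)) p ≤ a ↔ p < s := by
  simp only [rightQ_cdf_le_iff hp, cdf_bernoulliMeasure_apply, cdf_dirac_apply]
  refine ⟨fun h ↦ ?_, fun h y hay ↦ ?_⟩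
  · obtain ⟨y, hay, hyb⟩ := exists_between hab
    simpa [hay.le, hyb.not_ge] using h y hay
  · rw [if_pos hay.le]
    split_ifs
    · linarith [hp.2]
    · linarith

lemma not_lowerSemicontinuous_distortT_thresholdDF {p : ℝ} (hp : p ∈ Ioo 0 1) :
    ∃ Fn : ℕ → ℝ → ℝ, ∃ F G : ℝ → ℝ,
      (∀ n, Fn n ∈ mSet) ∧ F ∈ mSet ∧ G ∈ mSet ∧
      (∀ x, ContinuousAt F x → Tendsto (fun n ↦ Fn n x) atTop (𝓝 (F x))) ∧
      (∀ n, ∀ x, G x ≤ distortT (thresholdDF p) (Fn n) x) ∧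
      ¬ (∀ x, G x ≤ distortT (thresholdDF p) F x) := by
  let s : I := ⟨p, hp.1.le, hp.2.le⟩
  obtain ⟨t, -, ht, htendsto⟩ := exists_seq_strictAnti_tendsto' (show s < 1 from hp.2)
  have hdom (r : I) :
      (∀ x, cdf (Measure.dirac 0) x ≤ distortT (thresholdDF p) (cdf Ber(0, 1, r)) x) ↔ p < r := by
    rw [distortT_thresholdDF_cdf hp, forall_cdf_dirac_le_iff,
      rightQ_cdf_bernoulliMeasure_le_iff hp zero_lt_one]
  exact ⟨fun n ↦ cdf Ber(0, 1, t n), cdf Ber(0, 1, s), cdf (Measure.dirac 0),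
    fun _ ↦ cdf_bernoulliMeasure_mem_mSet zero_le_one, cdf_bernoulliMeasure_mem_mSet zero_le_one,
    cdf_mem_mSet_of_ae_mem_Icc (a := 0) (b := 0) (by simp [ae_dirac_eq]),
    fun x _ ↦ tendsto_cdf_bernoulliMeasure htendsto x,
    fun n ↦ (hdom (t n)).mpr (ht n).1, fun h ↦ lt_irrefl p ((hdom s).mp h)⟩

end Bernoulli

theorem stmt18_general {p : ℝ} (hp : p ∈ Ioo 0 1) :
    IsDFhat (thresholdDF p) ∧
    (∀ F ∈ m0Set, ∀ x, distortT (thresholdDF p) F x = if rightQ F p ≤ x then (1 : ℝ) else 0) ∧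
    (∀ F ∈ m0Set, ∀ G ∈ m0Set, (∀ x, G x ≤ F x) →
      ∀ x, distortT (thresholdDF p) G x ≤ distortT (thresholdDF p) F x) ∧
    (∀ u : ℝ → ℝ, Monotone u → (∀ x, ContinuousWithinAt u (Ioi x) x) → ∀ F ∈ m0Set,
      distortT (thresholdDF p) (utilityT u F) = utilityT u (distortT (thresholdDF p) F)) ∧
    (∃ Fn : ℕ → ℝ → ℝ, ∃ F G : ℝ → ℝ,
      (∀ n, Fn n ∈ mSet) ∧ F ∈ mSet ∧ G ∈ mSet ∧
      (∀ x, ContinuousAt F x → Tendsto (fun n ↦ Fn n x) atTop (𝓝 (F x))) ∧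
      (∀ n, ∀ x, G x ≤ distortT (thresholdDF p) (Fn n) x) ∧
      ¬ (∀ x, G x ≤ distortT (thresholdDF p) F x)) := by
  have hd := isDFhat_thresholdDF hp
  refine ⟨hd, fun F hF x ↦ ?_, fun F hF G hG ↦ distortT_le_distortT hd.1 hF hG,
    fun u hu hright F hF ↦ ?_, not_lowerSemicontinuous_distortT_thresholdDF hp⟩
  · obtain ⟨μ, -, rfl⟩ := exists_cdf_eq_of_mem_m0Set hF
    rw [distortT_thresholdDF_cdf hp, cdf_dirac_apply]
  · obtain ⟨μ, _, rfl⟩ := exists_cdf_eq_of_mem_m0Set hF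
    exact distortT_thresholdDF_utilityT hp hu (hright _)

/-- `d18` is a distortion function, `T_{d18} F` is the point mass at the right
quantile `F_R^{-1}(1/2)` for every `F ∈ M`, `T_{d18}` is monotone and commutes
with `T^u` for every increasing continuous `u`, but `T_{d18}` is not
lower-semicontinuous: there are `F_n → F` weakly in `M` and `G ∈ M` with
`T_{d18} F_n ≤_st G` for all `n` while `T_{d18} F ≤_st G` fails. -/
theorem stmt18 :
    IsDF d18 ∧
    (∀ F ∈ mSet, ∀ x, distortT d18 F x = if rightQ F (1 / 2) ≤ x then (1:ℝ) else 0) ∧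
    (∀ F ∈ mSet, ∀ G ∈ mSet, (∀ x, G x ≤ F x) →
      ∀ x, distortT d18 G x ≤ distortT d18 F x) ∧
    (∀ u : ℝ → ℝ, IsUF u → ∀ F ∈ mSet,
      distortT d18 (utilityT u F) = utilityT u (distortT d18 F)) ∧
    (∃ Fn : ℕ → ℝ → ℝ, ∃ F G : ℝ → ℝ,
      (∀ n, Fn n ∈ mSet) ∧ F ∈ mSet ∧ G ∈ mSet ∧
      (∀ x, ContinuousAt F x → Tendsto (fun n => Fn n x) atTop (𝓝 (F x))) ∧
      (∀ n, ∀ x, G x ≤ distortT d18 (Fn n) x) ∧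
      ¬ (∀ x, G x ≤ distortT d18 F x)) := by
  obtain ⟨hd, hquantile, hmono, hcomm, hlsc⟩ := stmt18_general (p := 1 / 2) (by norm_num)
  exact ⟨hd.1, fun F hF ↦ hquantile F (mSet_subset_m0Set hF),
    fun F hF G hG ↦ hmono F (mSet_subset_m0Set hF) G (mSet_subset_m0Set hG),
    fun u hu F hF ↦ hcomm u hu.1 (fun _ ↦ hu.2.continuousWithinAt) F (mSet_subset_m0Set hF), hlsc⟩
end
end
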